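/- arXiv:2311.02388 — 2 statements merged into one kernel-verified Lean document; each statement's English description precedes it below -/
import Mathlib

section
/- For every natural number p, one has f(p,p) = 1. -/
/-- `mex S` is the least natural number not belonging to `S`. -/
noncomputable def mex (S : Set ℕ) : ℕ := sInf {n : ℕ | n ∉ S}

/-- `h 0 = 0` and `h n = 1` for all `n ≥ 1`. -/
def h : ℕ → ℕ
  | 0 => 0
  | _ + 1 => 1

/-- The nimber of the Circular sprout game `CS₄(𝒫₄ : p,1,q,1)`, defined by strong
recursion: `f p q` is the mex of the set consisting of `h p ^^^ h q` together with all
values `f p' q' ^^^ f (p-1-p') (q-1-q')` for `0 ≤ p' ≤ p-1` and `0 ≤ q' ≤ q-1`. -/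
noncomputable def f (p q : ℕ) : ℕ :=
  mex ({h p ^^^ h q} ∪
    ⋃ (p' : ℕ) (_ : p' < p) (q' : ℕ) (_ : q' < q),
      {f p' q' ^^^ f (p - 1 - p') (q - 1 - q')})
termination_by p
decreasing_by
  · omega
  · omega

/-!
When a diagonal position `(p, p)` is split into `(a, b)` and `(a', b')`, so that
`a + a' + 1 = p = b + b' + 1`, either both parts are diagonal or neither is. If off-diagonal nimbers
are even, the options of `f p p` are therefore `h p ^^^ h p = 0`, `1 ^^^ 1 = 0` and Nim-sums of two
even numbers, so `0` is an option and `1` is not.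

Evenness off the diagonal is read off from the exact value `f p q = 2 * halfNimber p q` for
`p ≠ q`. A candidate closed form equals `f` as soon as it satisfies the recursion of `f`, and this
is checked by parity. Let `0 < p < q` and `m = halfNimber p q`.

* Odd options come from the splits with a diagonal part. Since `halfNimber` starts at `0` and grows
  by at most one per step along a line of slope one, they include every odd number below `2 * m`.
* Even options come from the splits into two off-diagonal parts. The value `2 * m` is not among
  them: equal values have Nim-sum `0`, and for unequal ones the Nim-sum is at most the sum, which
  stays below `m` because `halfNimber` is strictly superadditive. The smaller even numbers come, up
  to the order of the coordinates, from the splits with a part `(0, j)` of nimber `0`, by the same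
  discrete continuity; at most one number is missed, and it comes from a split with a part `(1, 2)`
  of nimber `2`.
-/

theorem xor_le_add (a b : ℕ) : a ^^^ b ≤ a + b := by
  induction a using Nat.strong_induction_on generalizing b with
  | _ a ih =>
    rcases Nat.eq_zero_or_pos a with rfl | ha
    · simp
    · have half_le := ih (a / 2) (by omega) (b / 2)
      have half_eq : (a ^^^ b) / 2 = a / 2 ^^^ b / 2 := Nat.xor_div_two
      have parity : (a ^^^ b) % 2 = (a + b) % 2 := Nat.xor_mod_two_eq
      omega

theorem two_mul_xor_two_mul (a b : ℕ) : (2 * a) ^^^ (2 * b) = 2 * (a ^^^ b) :=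
  Nat.xor_bit false a false b

theorem one_xor_two_mul (k : ℕ) : 1 ^^^ (2 * k) = 2 * k + 1 := by
  rw [Nat.xor_comm, Nat.xor_one_of_even (even_two_mul k)]

theorem exists_le_apply_eq {u : ℕ → ℕ} (hu : ∀ i, u (i + 1) ≤ u i + 1) {k n : ℕ}
    (h_zero : u 0 ≤ k) (hk : k ≤ u n) : ∃ i ≤ n, u i = k := by
  induction n with
  | zero => exact ⟨0, le_rfl, h_zero.antisymm hk⟩
  | succ n ih =>
    rcases le_or_gt k (u n) with hkn | hkn
    · obtain ⟨i, hi, hik⟩ := ih hkn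
      exact ⟨i, by omega, hik⟩
    · exact ⟨n + 1, le_rfl, by have := hu n; omega⟩

theorem mex_eq {S : Set ℕ} {n : ℕ} (hn : n ∉ S) (hlt : ∀ m < n, m ∈ S) : mex S = n :=
  IsLeast.csInf_eq ⟨hn, fun m hm => not_lt.mp fun hmn => hm (hlt m hmn)⟩

theorem h_of_pos {n : ℕ} (hn : 0 < n) : h n = 1 := by
  obtain ⟨m, rfl⟩ := Nat.exists_eq_succ_of_ne_zero hn.ne'
  rfl

/-- The options of the position `(p, q)` when the positions have the values `v`, so that the
recursion of `f` reads `f p q = mex (options f p q)`. A split is given by its parts `(a, b)` and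
`(a', b')`, which avoids truncated subtraction. -/
def options (v : ℕ → ℕ → ℕ) (p q : ℕ) : Set ℕ :=
  {n | n = h p ^^^ h q ∨
    ∃ a b a' b', a + a' + 1 = p ∧ b + b' + 1 = q ∧ n = v a b ^^^ v a' b'}

theorem options_congr {u v : ℕ → ℕ → ℕ} {p : ℕ} (huv : ∀ a < p, ∀ b, u a b = v a b) (q : ℕ) :
    options u p q = options v p q := by
  ext n
  refine or_congr Iff.rfl ⟨?_, ?_⟩ <;> rintro ⟨a, b, a', b', hp, hq, rfl⟩ <;>
    exact ⟨a, b, a', b', hp, hq, by rw [huv a (by omega), huv a' (by omega)]⟩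

theorem options_swap_subset {v : ℕ → ℕ → ℕ} (hv : ∀ a b, v a b = v b a) (p q : ℕ) :
    options v p q ⊆ options v q p := by
  rintro n (rfl | ⟨a, b, a', b', hp, hq, rfl⟩)
  · exact Or.inl (Nat.xor_comm _ _)
  · exact Or.inr ⟨b, a, b', a', hq, hp, by rw [hv a, hv a']⟩

theorem options_swap {v : ℕ → ℕ → ℕ} (hv : ∀ a b, v a b = v b a) (p q : ℕ) :
    options v p q = options v q p :=
  (options_swap_subset hv p q).antisymm (options_swap_subset hv q p)

theorem f_eq_mex_options (p q : ℕ) : f p q = mex (options f p q) := by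
  rw [f]
  congr 1
  ext n
  simp only [Set.mem_union, Set.mem_singleton_iff, Set.mem_iUnion]
  refine or_congr Iff.rfl ⟨?_, ?_⟩
  · rintro ⟨a, ha, b, hb, rfl⟩
    exact ⟨a, b, p - 1 - a, q - 1 - b, by omega, by omega, rfl⟩
  · rintro ⟨a, b, a', b', rfl, rfl, rfl⟩
    refine ⟨a, by omega, b, by omega, ?_⟩
    rw [show a + a' + 1 - 1 - a = a' by omega, show b + b' + 1 - 1 - b = b' by omega]

theorem f_eq_of_forall_eq_mex_options {v : ℕ → ℕ → ℕ}
    (hv : ∀ p q, v p q = mex (options v p q)) (p q : ℕ) : f p q = v p q := by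
  induction p using Nat.strong_induction_on generalizing q with
  | _ p ih => rw [f_eq_mex_options, options_congr ih, ← hv]

/-- The bound that the sum `s = p + q` puts on half the nimber of `(p, q)` for `p ≠ q`. The value
`1` at `s = 3`, where the quotient is `0`, accounts for the nimber `2` of `(1, 2)`. -/
def sumCap (s : ℕ) : ℕ := if s = 3 then 1 else (2 * s - 2) / 5

theorem sumCap_succ_le (s : ℕ) : sumCap (s + 1) ≤ sumCap s + 1 := by
  unfold sumCap
  split_ifs <;> omega

theorem sumCap_add_two_le (s : ℕ) : sumCap (s + 2) ≤ sumCap s + 1 := by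
  unfold sumCap
  split_ifs <;> omega

theorem sumCap_add_sumCap_lt {s t : ℕ} (hs : 0 < s) (ht : 0 < t) (hst : s ≠ 3 ∨ t ≠ 3) :
    sumCap s + sumCap t < sumCap (s + t + 2) := by
  unfold sumCap
  split_ifs <;> omega

theorem exists_eq_five_mul_add_of_sumCap_add_one_lt {s : ℕ} (hs : sumCap s + 1 < sumCap (s + 3)) :
    ∃ j, s = 5 * j + 8 := by
  refine ⟨(s - 8) / 5, ?_⟩
  unfold sumCap at hs
  split_ifs at hs <;> omega

/-- Half the nimber of an off-diagonal position `(p, q)`. On the diagonal, where the nimber is `1`,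
the same expression is kept because it interpolates between the neighbouring values. -/
def halfNimber (p q : ℕ) : ℕ := min (min p q) (sumCap (p + q))

theorem halfNimber_comm (p q : ℕ) : halfNimber p q = halfNimber q p := by
  rw [halfNimber, halfNimber, min_comm p, Nat.add_comm p]

theorem halfNimber_zero_left (q : ℕ) : halfNimber 0 q = 0 := by
  simp [halfNimber]

theorem halfNimber_pos {p q : ℕ} (hp : 0 < p) (hpq : p < q) : 0 < halfNimber p q := by
  unfold halfNimber sumCap
  split_ifs <;> omega

theorem halfNimber_succ_right_le (p q : ℕ) : halfNimber p (q + 1) ≤ halfNimber p q + 1 := by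
  have := sumCap_succ_le (p + q)
  simp only [halfNimber, ← Nat.add_assoc]
  omega

theorem halfNimber_succ_succ_le (p q : ℕ) :
    halfNimber (p + 1) (q + 1) ≤ halfNimber p q + 1 := by
  have := sumCap_add_two_le (p + q)
  simp only [halfNimber, show p + 1 + (q + 1) = p + q + 2 by omega]
  omega

/-- For the parts `(1, 2)` and `(1, 2)` of `(3, 5)` both sides are `2`; the Nim-sum of equal values
is `0` anyway. -/
theorem halfNimber_add_halfNimber_lt {a b a' b' : ℕ} (hab : a ≠ b) (hab' : a' ≠ b')
    (hne : halfNimber a b ≠ halfNimber a' b') :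
    halfNimber a b + halfNimber a' b' < halfNimber (a + a' + 1) (b + b' + 1) := by
  have lt_cap : halfNimber a b + halfNimber a' b' < sumCap (a + b + (a' + b') + 2) := by
    by_cases h_three : a + b = 3 ∧ a' + b' = 3
    · have cap_eight : sumCap (3 + 3 + 2) = 2 := rfl
      rw [h_three.1, h_three.2, cap_eight]
      unfold halfNimber at hne ⊢
      omega
    · have := sumCap_add_sumCap_lt (s := a + b) (t := a' + b') (by omega) (by omega) (by omega)
      unfold halfNimber
      omega
  rw [show a + b + (a' + b') + 2 = a + a' + 1 + (b + b' + 1) by omega] at lt_cap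
  unfold halfNimber at *
  omega

theorem exists_halfNimber_eq_self (r : ℕ) :
    ∃ j ≤ r + 1, j ≠ r ∧ halfNimber r j = halfNimber r r := by
  by_cases hr : sumCap (r + r) = sumCap (r + (r + 1))
  · exact ⟨r + 1, le_rfl, by omega, by unfold halfNimber; omega⟩
  · refine ⟨r - 1, by omega, ?_⟩
    unfold halfNimber
    unfold sumCap at *
    split_ifs at * <;> omega

theorem exists_offDiag_halfNimber_eq {r b k : ℕ} (hrb : r ≠ b) (hk : k ≤ halfNimber r b) :
    ∃ j ≤ b, j ≠ r ∧ halfNimber r j = k := by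
  have h_zero : halfNimber r 0 ≤ k := by simp [halfNimber]
  obtain ⟨i, hi, hik⟩ := exists_le_apply_eq (halfNimber_succ_right_le r) h_zero hk
  by_cases hir : i = r
  · obtain ⟨j, hj, hjr, hj_eq⟩ := exists_halfNimber_eq_self r
    exact ⟨j, by omega, hjr, by rw [hj_eq, ← hik, hir]⟩
  · exact ⟨i, hi, hir, hik⟩

/-- The halves of the options of `(p, q)` that come from splits into two off-diagonal parts. -/
def halfOptions (p q : ℕ) : Set ℕ :=
  {k | ∃ a b a' b', a + a' + 1 = p ∧ b + b' + 1 = q ∧ a ≠ b ∧ a' ≠ b' ∧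
    k = halfNimber a b ^^^ halfNimber a' b'}

theorem mem_halfOptions_swap {p q k : ℕ} (hk : k ∈ halfOptions p q) : k ∈ halfOptions q p := by
  obtain ⟨a, b, a', b', hp, hq, hab, hab', rfl⟩ := hk
  exact ⟨b, a, b', a', hq, hp, hab.symm, hab'.symm,
    by rw [halfNimber_comm a, halfNimber_comm a']⟩

theorem mem_halfOptions_of_le_halfNimber {r b k : ℕ} (hrb : r ≠ b) (hk : k ≤ halfNimber r b) :
    k ∈ halfOptions (r + 1) (b + 2) := by
  obtain ⟨j, hj, hjr, rfl⟩ := exists_offDiag_halfNimber_eq hrb hk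
  exact ⟨r, j, 0, b + 1 - j, by omega, by omega, hjr.symm, by omega,
    by rw [halfNimber_zero_left, Nat.xor_zero]⟩

theorem halfNimber_eq_of_add_eq {p q j : ℕ} (hp : 2 * j + 2 ≤ p) (hq : 2 * j + 2 ≤ q)
    (hpq : p + q = 5 * j + 6) : halfNimber p q = 2 * (j + 1) := by
  rw [halfNimber, hpq, sumCap, if_neg (by omega)]
  omega

theorem mem_halfOptions_of_add_eq {r b j : ℕ} (hrb : r ≠ b) (hr : 2 * j + 3 ≤ r)
    (hb : 2 * j + 3 ≤ b) (hsum : r + b = 5 * j + 8) :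
    2 * j + 3 ∈ halfOptions (r + 1) (b + 2) := by
  refine ⟨1, 2, r - 1, b - 1, by omega, by omega, by omega, by omega, ?_⟩
  rw [show halfNimber 1 2 = 1 from rfl,
    halfNimber_eq_of_add_eq (j := j) (by omega) (by omega) (by omega), one_xor_two_mul]
  omega

theorem mem_halfOptions_of_lt_sumCap {r b k : ℕ} (hrb : r ≠ b) (hr : k ≤ r) (hb : k ≤ b)
    (hk : k < sumCap (r + b + 3)) : k ∈ halfOptions (r + 1) (b + 2) := by
  rcases le_or_gt k (sumCap (r + b)) with hle | hgt
  · exact mem_halfOptions_of_le_halfNimber hrb (le_min (le_min hr hb) hle)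
  · obtain ⟨j, hj⟩ := exists_eq_five_mul_add_of_sumCap_add_one_lt (s := r + b) (by omega)
    obtain rfl : k = 2 * j + 3 := by
      rw [hj, sumCap, if_neg (by omega)] at hgt hk
      omega
    exact mem_halfOptions_of_add_eq hrb hr hb hj

theorem mem_halfOptions_of_lt_halfNimber {p q k : ℕ} (hpq : p < q) (hk_pos : 0 < k)
    (hk : k < halfNimber p q) : k ∈ halfOptions p q := by
  simp only [halfNimber, lt_min_iff] at hk
  obtain ⟨⟨hkp, hkq⟩, hk_cap⟩ := hk
  obtain ⟨p, rfl⟩ : ∃ n, p = n + 2 := ⟨p - 2, by omega⟩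
  rcases (Nat.succ_le_of_lt hpq).eq_or_lt with rfl | hlt
  · have hkp' : k ≤ p := by
      rw [sumCap, if_neg (by omega)] at hk_cap
      omega
    refine mem_halfOptions_swap (mem_halfOptions_of_lt_sumCap (by omega) (by omega) hkp' ?_)
    rwa [show p + 2 + p + 3 = p + 2 + (p + 2).succ by omega]
  · obtain ⟨q, rfl⟩ : ∃ n, q = n + 2 := ⟨q - 2, by omega⟩
    refine mem_halfOptions_of_lt_sumCap (by omega) (by omega) (by omega) ?_
    rwa [show p + 1 + q + 3 = p + 2 + (q + 2) by omega]

theorem halfNimber_notMem_halfOptions {p q : ℕ} (hpos : 0 < halfNimber p q) :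
    halfNimber p q ∉ halfOptions p q := by
  rintro ⟨a, b, a', b', rfl, rfl, hab, hab', h_eq⟩
  by_cases hne : halfNimber a b = halfNimber a' b'
  · rw [hne, Nat.xor_self] at h_eq
    omega
  · have h_lt := halfNimber_add_halfNimber_lt hab hab' hne
    have h_le := xor_le_add (halfNimber a b) (halfNimber a' b')
    omega

/-- The closed form of the nimber `f p q`. -/
def sproutNimber (p q : ℕ) : ℕ := if p = q then 1 else 2 * halfNimber p q

theorem sproutNimber_self (p : ℕ) : sproutNimber p p = 1 := if_pos rfl

theorem sproutNimber_of_ne {p q : ℕ} (hpq : p ≠ q) : sproutNimber p q = 2 * halfNimber p q :=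
  if_neg hpq

theorem sproutNimber_comm (p q : ℕ) : sproutNimber p q = sproutNimber q p := by
  simp only [sproutNimber, eq_comm (a := p), halfNimber_comm p]

theorem h_xor_h_of_pos {p q : ℕ} (hp : 0 < p) (hq : 0 < q) : h p ^^^ h q = 0 := by
  rw [h_of_pos hp, h_of_pos hq, Nat.xor_self]

theorem two_mul_mem_options_iff {p q : ℕ} (hp : 0 < p) (hpq : p < q) (k : ℕ) :
    2 * k ∈ options sproutNimber p q ↔ k = 0 ∨ k ∈ halfOptions p q := by
  rw [options, Set.mem_ofPred_eq, h_xor_h_of_pos hp (hp.trans hpq)]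
  refine or_congr (by omega) ⟨?_, ?_⟩
  · rintro ⟨a, b, a', b', rfl, rfl, hk⟩
    have not_diag : a ≠ b ∧ a' ≠ b' := by
      constructor <;> rintro rfl
      · rw [sproutNimber_self, sproutNimber_of_ne (by omega), one_xor_two_mul] at hk
        omega
      · rw [sproutNimber_self, sproutNimber_of_ne (by omega), Nat.xor_comm, one_xor_two_mul] at hk
        omega
    rw [sproutNimber_of_ne not_diag.1, sproutNimber_of_ne not_diag.2, two_mul_xor_two_mul] at hk
    exact ⟨a, b, a', b', rfl, rfl, not_diag.1, not_diag.2, by omega⟩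
  · rintro ⟨a, b, a', b', h_left, h_right, hab, hab', rfl⟩
    refine ⟨a, b, a', b', h_left, h_right, ?_⟩
    rw [sproutNimber_of_ne hab, sproutNimber_of_ne hab', two_mul_xor_two_mul]

theorem two_mul_add_one_mem_options {p q k : ℕ} (hpq : p < q) (hk : k < halfNimber p q) :
    2 * k + 1 ∈ options sproutNimber p q := by
  obtain ⟨d, rfl⟩ := Nat.exists_eq_add_of_lt hpq
  obtain ⟨p, rfl⟩ : ∃ n, p = n + 1 := ⟨p - 1, by simp only [halfNimber] at hk; omega⟩
  obtain ⟨i, hi, hik⟩ : ∃ i ≤ p, halfNimber i (i + (d + 1)) = k := by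
    refine exists_le_apply_eq (u := fun i => halfNimber i (i + (d + 1))) (fun i => ?_) ?_ ?_
    · simpa only [Nat.add_right_comm i 1] using halfNimber_succ_succ_le i (i + (d + 1))
    · simp only [halfNimber_zero_left, Nat.zero_le]
    · have := halfNimber_succ_succ_le p (p + (d + 1))
      rw [show p + 1 + d + 1 = p + (d + 1) + 1 by omega] at hk
      omega
  refine Or.inr ⟨p - i, p - i, i, i + (d + 1), by omega, by omega, ?_⟩
  rw [sproutNimber_self, sproutNimber_of_ne (by omega), hik, one_xor_two_mul]

theorem sproutNimber_eq_mex_diag (p : ℕ) :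
    sproutNimber p p = mex (options sproutNimber p p) := by
  rw [sproutNimber_self]
  refine (mex_eq ?_ fun m hm => Or.inl ?_).symm
  · rintro (h_eq | ⟨a, b, a', b', h_left, h_right, h_eq⟩)
    · rw [Nat.xor_self] at h_eq
      omega
    · by_cases hab : a = b
      · obtain rfl : a' = b' := by omega
        rw [hab, sproutNimber_self, sproutNimber_self, Nat.xor_self] at h_eq
        omega
      · rw [sproutNimber_of_ne hab, sproutNimber_of_ne (by omega), two_mul_xor_two_mul] at h_eq
        omega
  · rw [Nat.xor_self]
    omega

theorem sproutNimber_eq_mex_zero {q : ℕ} (hq : 0 < q) :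
    sproutNimber 0 q = mex (options sproutNimber 0 q) := by
  rw [sproutNimber_of_ne hq.ne, halfNimber_zero_left]
  refine (mex_eq ?_ (by omega)).symm
  rintro (h_eq | ⟨a, b, a', b', h_left, -⟩)
  · rw [h_of_pos hq] at h_eq
    simp [h] at h_eq
  · omega

theorem sproutNimber_eq_mex_of_lt {p q : ℕ} (hpq : p < q) :
    sproutNimber p q = mex (options sproutNimber p q) := by
  rcases Nat.eq_zero_or_pos p with rfl | hp
  · exact sproutNimber_eq_mex_zero hpq
  rw [sproutNimber_of_ne hpq.ne]
  have hpos := halfNimber_pos hp hpq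
  refine (mex_eq ?_ fun m hm => ?_).symm
  · rw [two_mul_mem_options_iff hp hpq]
    exact not_or.mpr ⟨hpos.ne', halfNimber_notMem_halfOptions hpos⟩
  · obtain ⟨k, rfl | rfl⟩ := m.even_or_odd'
    · rw [two_mul_mem_options_iff hp hpq]
      exact k.eq_zero_or_pos.imp_right fun hk =>
        mem_halfOptions_of_lt_halfNimber hpq hk (by omega)
    · exact two_mul_add_one_mem_options hpq (by omega)

theorem f_eq_sproutNimber (p q : ℕ) : f p q = sproutNimber p q := by
  refine f_eq_of_forall_eq_mex_options (fun p q => ?_) p q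
  rcases lt_trichotomy p q with hlt | rfl | hgt
  · exact sproutNimber_eq_mex_of_lt hlt
  · exact sproutNimber_eq_mex_diag p
  · rw [sproutNimber_comm, options_swap sproutNimber_comm]
    exact sproutNimber_eq_mex_of_lt hgt

theorem stmt4 (p : ℕ) : f p p = 1 := by
  rw [f_eq_sproutNimber, sproutNimber_self]
end

section
/- For all natural numbers p, q with p < q < 2p − ⌊|p−2|/2⌋ (an inequality of integers), and for all natural numbers p' ≤ p−1 and q' ≤ q−1, one has f(p',q') ⊕ f(p−1−p', q−1−q') ≠ F(p,q). -/
/-- `idx p q` is the unique element of `{1,2,3,4,5}` congruent to `p + q` modulo `5`. -/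
def idx (p q : ℕ) : ℕ := if (p + q) % 5 = 0 then 5 else (p + q) % 5

/-- `F p q = (4/5)·(p + q − idx p q) + 2·⌊idx p q / 4⌋`. -/
def F (p q : ℕ) : ℕ := 4 * ((p + q - idx p q) / 5) + 2 * (idx p q / 4)

lemma mex_le {S : Set ℕ} {n : ℕ} (hn : n ∉ S) : mex S ≤ n :=
  Nat.sInf_le hn

lemma mex_notMem {S : Set ℕ} {n : ℕ} (hn : n ∉ S) : mex S ∉ S :=
  Nat.sInf_mem (s := {m | m ∉ S}) ⟨n, hn⟩

lemma mex_singleton_zero : mex {0} = 1 := by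
  have hone : (1 : ℕ) ∉ ({0} : Set ℕ) := one_ne_zero
  exact le_antisymm (mex_le hone) (Nat.one_le_iff_ne_zero.mpr (mex_notMem hone))

lemma h_xor_h_le_one (p q : ℕ) : h p ^^^ h q ≤ 1 := by
  cases p <;> cases q <;> simp [h]

lemma xor_le_add_s7 (x y : ℕ) : x ^^^ y ≤ x + y := by
  induction x using Nat.strong_induction_on generalizing y with
  | _ x ih =>
    rcases Nat.eq_zero_or_pos x with rfl | hx
    · simp
    · have hhalf : (x ^^^ y) / 2 ≤ x / 2 + y / 2 :=
        Nat.xor_div_two.trans_le (ih (x / 2) (by omega) (y / 2))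
      have hparity : (x ^^^ y) % 2 = (x + y) % 2 := Nat.xor_mod_two_eq
      omega

lemma one_xor_ne_of_le {y v : ℕ} (hv : Even v) (hy : y ≤ v) : 1 ^^^ y ≠ v := by
  rintro rfl
  have hy_eq : y = (1 ^^^ y) + 1 := by
    rw [← Nat.xor_one_of_even hv, Nat.xor_comm 1, Nat.xor_xor_cancel_right]
  omega

lemma f_le {p q v : ℕ} (hv : h p ^^^ h q ≠ v)
    (hopt : ∀ a b c d, a + c + 1 = p → b + d + 1 = q → f a b ^^^ f c d ≠ v) :
    f p q ≤ v := by
  rw [f]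
  apply mex_le
  simp only [Set.mem_union, Set.mem_singleton_iff, Set.mem_iUnion, not_or, not_exists]
  exact ⟨hv.symm, fun a ha b hb hab =>
    hopt a b (p - 1 - a) (q - 1 - b) (by omega) (by omega) hab.symm⟩

lemma f_zero_zero : f 0 0 = 1 := by
  rw [f]
  simp [h, mex_singleton_zero]

lemma f_zero_left {q : ℕ} (hq : 0 < q) : f 0 q = 0 := by
  obtain ⟨n, rfl⟩ := Nat.exists_eq_add_of_lt hq
  exact Nat.le_zero.mp <| f_le (by simp [h]) (by omega)

lemma f_zero_right {p : ℕ} (hp : 0 < p) : f p 0 = 0 := by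
  obtain ⟨n, rfl⟩ := Nat.exists_eq_add_of_lt hp
  exact Nat.le_zero.mp <| f_le (by simp [h]) (by omega)

lemma f_xor_f_le_add {a b c d : ℕ} (hab : 0 < a + b → f a b < a + b)
    (hcd : 0 < c + d → f c d < c + d) : f a b ^^^ f c d ≤ a + b + (c + d) := by
  have hle : f a b ^^^ f c d ≤ f a b + f c d := xor_le_add_s7 _ _
  rcases Nat.eq_zero_or_pos (a + b) with hs | hs
  · obtain ⟨rfl, rfl⟩ := Nat.add_eq_zero_iff.mp hs
    rcases Nat.eq_zero_or_pos (c + d) with ht | ht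
    · obtain ⟨rfl, rfl⟩ := Nat.add_eq_zero_iff.mp ht
      rw [Nat.xor_self]
    · have hcdlt : f c d < c + d := hcd ht
      rw [f_zero_zero] at hle ⊢
      omega
  · have hablt : f a b < a + b := hab hs
    rcases Nat.eq_zero_or_pos (c + d) with ht | ht
    · obtain ⟨rfl, rfl⟩ := Nat.add_eq_zero_iff.mp ht
      rw [f_zero_zero] at hle ⊢
      omega
    · have hcdlt : f c d < c + d := hcd ht
      omega

lemma f_lt_add {p q : ℕ} (hpq : 0 < p + q) : f p q < p + q := by
  induction p using Nat.strong_induction_on generalizing q with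
  | _ p ih =>
    rcases p with _ | p
    · rwa [f_zero_left (by omega)]
    rcases q with _ | q
    · rwa [f_zero_right hpq]
    suffices f (p + 1) (q + 1) ≤ p + q + 1 by omega
    apply f_le
    · simp [h]
    · intro a b c d hac hbd
      have hle : f a b ^^^ f c d ≤ a + b + (c + d) :=
        f_xor_f_le_add (ih a (by omega)) (ih c (by omega))
      omega

lemma F_eq_two_mul_div {p q : ℕ} (hpq : 0 < p + q) : F p q = 2 * (2 * (p + q - 1) / 5) := by
  obtain ⟨hpos, hle, hmod⟩ : 0 < idx p q ∧ idx p q ≤ 5 ∧ (p + q) % 5 = idx p q % 5 := by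
    unfold idx
    split_ifs <;> omega
  unfold F
  generalize idx p q = i at *
  interval_cases i <;> omega

lemma even_F (p q : ℕ) : Even (F p q) := by
  unfold F
  exact ⟨2 * ((p + q - idx p q) / 5) + idx p q / 4, by ring⟩

section Options

variable {a b c d : ℕ}

lemma one_xor_f_ne_F (hcd : 4 ≤ c + d → f c d ≤ F c d) (hpos : 0 < c + d) :
    1 ^^^ f c d ≠ F (c + 1) (d + 1) := by
  apply one_xor_ne_of_le (even_F _ _)
  have hlt : f c d < c + d := f_lt_add hpos
  rw [F_eq_two_mul_div hpos] at hcd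
  rw [F_eq_two_mul_div (by omega)]
  omega

lemma f_xor_f_ne_F_of_pos (hab : 4 ≤ a + b → f a b ≤ F a b) (hcd : 4 ≤ c + d → f c d ≤ F c d)
    (hs : 0 < a + b) (ht : 0 < c + d) :
    f a b ^^^ f c d ≠ F (a + c + 1) (b + d + 1) := by
  have hablt : f a b < a + b := f_lt_add hs
  have hcdlt : f c d < c + d := f_lt_add ht
  by_cases h3 : a + b = 3 ∧ c + d = 3
  · -- Here `F = 4` and both values may be `2`, so the bound by the ordinary sum is too weak.
    have hlt : f a b ^^^ f c d < 2 ^ 2 := Nat.xor_lt_two_pow (by omega) (by omega)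
    rw [F_eq_two_mul_div (by omega)]
    omega
  · have hle : f a b ^^^ f c d ≤ f a b + f c d := xor_le_add_s7 _ _
    rw [F_eq_two_mul_div hs] at hab
    rw [F_eq_two_mul_div ht] at hcd
    rw [F_eq_two_mul_div (by omega)]
    omega

lemma f_xor_f_ne_F (hab : 4 ≤ a + b → f a b ≤ F a b) (hcd : 4 ≤ c + d → f c d ≤ F c d)
    (hpos : 0 < a + b + (c + d)) : f a b ^^^ f c d ≠ F (a + c + 1) (b + d + 1) := by
  rcases Nat.eq_zero_or_pos (a + b) with hs | hs
  · obtain ⟨rfl, rfl⟩ := Nat.add_eq_zero_iff.mp hs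
    simpa only [f_zero_zero, zero_add] using one_xor_f_ne_F hcd (by omega)
  rcases Nat.eq_zero_or_pos (c + d) with ht | ht
  · obtain ⟨rfl, rfl⟩ := Nat.add_eq_zero_iff.mp ht
    simpa only [f_zero_zero, add_zero, Nat.xor_comm] using one_xor_f_ne_F hab hs
  exact f_xor_f_ne_F_of_pos hab hcd hs ht

end Options

theorem f_le_F {p q : ℕ} (hpq : 4 ≤ p + q) : f p q ≤ F p q := by
  induction p using Nat.strong_induction_on generalizing q with
  | _ p ih =>
    apply f_le
    · have hle : h p ^^^ h q ≤ 1 := h_xor_h_le_one p q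
      rw [F_eq_two_mul_div (by omega)]
      omega
    · rintro a b c d rfl rfl
      exact f_xor_f_ne_F (ih a (by omega)) (ih c (by omega)) (by omega)

theorem stmt7_general {p q p' q' : ℕ} (hpq : 3 ≤ p + q) (hp' : p' < p) (hq' : q' < q) :
    f p' q' ^^^ f (p - 1 - p') (q - 1 - q') ≠ F p q := by
  obtain ⟨c, rfl⟩ := Nat.exists_eq_add_of_lt hp'
  obtain ⟨d, rfl⟩ := Nat.exists_eq_add_of_lt hq'
  have hc : p' + c + 1 - 1 - p' = c := by omega
  have hd : q' + d + 1 - 1 - q' = d := by omega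
  rw [hc, hd]
  exact f_xor_f_ne_F f_le_F f_le_F (by omega)

theorem stmt7 (p q : ℕ) (hpq : p < q)
    (hq : (q : ℤ) < 2 * (p : ℤ) - |(p : ℤ) - 2| / 2)
    (p' q' : ℕ) (hp' : p' ≤ p - 1) (hq' : q' ≤ q - 1) :
    f p' q' ^^^ f (p - 1 - p') (q - 1 - q') ≠ F p q := by
  have hp : 2 ≤ p := by
    by_contra! hlt
    interval_cases p <;> norm_num at hq <;> omega
  exact stmt7_general (by omega) (by omega) (by omega)
end
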